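/- arXiv:2306.00109 — 2 statements merged into one kernel-verified Lean document; each statement's English description precedes it below -/
import Mathlib

section
/- Let D be a gluing of B and C over F and I. Then for every c ∈ C⁻ := C∖(F ∪ I) and every f ∈ F, both c·f and f·c belong to C⁻ (in particular c·f ∉ I and f·c ∉ I). -/
/-- An integral residuated lattice: a lattice, a monoid, residuation for the two
divisions `ld x z` (i.e. `x \ z`) and `rd z y` (i.e. `z / y`), with `1` the top. -/
class IRL (α : Type*) extends Lattice α, Monoid α where
  ld : α → α → α
  rd : α → α → α
  mul_le_iff_ld : ∀ x y z : α, x * y ≤ z ↔ y ≤ ld x z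
  mul_le_iff_rd : ∀ x y z : α, x * y ≤ z ↔ x ≤ rd z y
  le_one : ∀ x : α, x ≤ 1

namespace IRL

variable {α : Type*} [IRL α]

/-- `theta F x y` iff `x\y ∈ F` and `y\x ∈ F`. -/
def theta (F : Set α) (x y : α) : Prop := ld x y ∈ F ∧ ld y x ∈ F

/-- The equivalence class `[x]_F`. -/
def cls (F : Set α) (x : α) : Set α := {y | theta F x y}

/-- A congruence filter of an IRL. -/
structure IsCongFilter (F : Set α) : Prop where
  nonempty : F.Nonempty
  upward : ∀ x ∈ F, ∀ y : α, x ≤ y → y ∈ F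
  mul_mem : ∀ x ∈ F, ∀ y ∈ F, x * y ∈ F
  conjL : ∀ x ∈ F, ∀ y : α, ld y (x * y) ∈ F
  conjR : ∀ x ∈ F, ∀ y : α, rd (y * x) y ∈ F

end IRL

/-- A gluing of `B` and `C` over a congruence filter `F` and a lattice ideal `I`,
with `B ∩ C = F ∪ I`. -/
structure GluingOverFI {D : Type*} [IRL D] (B C F I : Set D) : Prop where
  union_eq : B ∪ C = Set.univ
  inter_eq : B ∩ C = F ∪ I
  filt : IRL.IsCongFilter F
  one_mem : (1 : D) ∈ F
  I_nonempty : I.Nonempty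
  I_down : ∀ x ∈ I, ∀ y : D, y ≤ x → y ∈ I
  I_lt : ∀ i ∈ I, ∀ x : D, x ∉ I → i < x
  F_gt : ∀ f ∈ F, ∀ x : D, x ∉ F → x < f
  lt_BC : ∀ b ∈ B \ (F ∪ I), ∀ c ∈ C \ (F ∪ I), b < c
  C_sup : ∀ x ∈ C, ∀ y ∈ C, x ⊔ y ∈ C
  C_mul : ∀ x ∈ C, ∀ y ∈ C, x * y ∈ C
  C_ld : ∀ x ∈ C, ∀ y ∈ C, IRL.ld x y ∈ C
  C_rd : ∀ x ∈ C, ∀ y ∈ C, IRL.rd x y ∈ C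
  B_inf : ∀ x ∈ B, ∀ y ∈ B, x ⊓ y ∈ B
  B_mul : ∀ x ∈ B, ∀ y ∈ B, x * y ∈ B
  B_ld : ∀ x ∈ B, ∀ y ∈ B, IRL.ld x y ∈ B
  B_rd : ∀ x ∈ B, ∀ y ∈ B, IRL.rd x y ∈ B

namespace IRL

variable {α : Type*} [IRL α] {F I : Set α} {f x : α}

theorem gc_mul_ld (x : α) : GaloisConnection (x * ·) (ld x) :=
  mul_le_iff_ld x

theorem gc_mul_rd (y : α) : GaloisConnection (· * y) (rd · y) :=
  fun x z ↦ mul_le_iff_rd x y z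

instance : MulLeftMono α :=
  ⟨fun x _ _ h ↦ (gc_mul_ld x).monotone_l h⟩

instance : MulRightMono α :=
  ⟨fun y _ _ h ↦ (gc_mul_rd y).monotone_l h⟩

-- If the residual `(x * f) / f` lies in `F`, then so does `((x * f) / f) * f ≤ x * f ≤ x`;
-- if it lies in `I`, then so does `x ≤ (x * f) / f`.
theorem mem_union_of_rd_mul_mem_union (hF : IsUpperSet F) (hF_mul : ∀ x ∈ F, ∀ y ∈ F, x * y ∈ F)
    (hI : IsLowerSet I) (hf : f ∈ F) (h : rd (x * f) f ∈ F ∪ I) : x ∈ F ∪ I := by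
  have mul_le : rd (x * f) f * f ≤ x :=
    ((gc_mul_rd f).l_u_le (x * f)).trans (mul_le_of_le_one_right' (le_one f))
  exact h.imp (fun hr ↦ hF mul_le (hF_mul _ hr f hf)) (hI ((gc_mul_rd f).le_u_l x))

theorem mem_union_of_ld_mul_mem_union (hF : IsUpperSet F) (hF_mul : ∀ x ∈ F, ∀ y ∈ F, x * y ∈ F)
    (hI : IsLowerSet I) (hf : f ∈ F) (h : ld f (f * x) ∈ F ∪ I) : x ∈ F ∪ I := by
  have mul_le : f * ld f (f * x) ≤ x :=
    ((gc_mul_ld f).l_u_le (f * x)).trans (mul_le_of_le_one_left' (le_one f))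
  exact h.imp (fun hr ↦ hF mul_le (hF_mul f hf _ hr)) (hI ((gc_mul_ld f).le_u_l x))

end IRL

namespace GluingOverFI

variable {D : Type*} [IRL D] {B C F I : Set D} {x y : D}

theorem isUpperSet_F (hg : GluingOverFI B C F I) : IsUpperSet F :=
  fun x y hxy hx ↦ hg.filt.upward x hx y hxy

theorem isLowerSet_I (hg : GluingOverFI B C F I) : IsLowerSet I :=
  fun x y hyx hx ↦ hg.I_down x hx y hyx

theorem F_subset_C (hg : GluingOverFI B C F I) : F ⊆ C :=
  Set.subset_union_left.trans (hg.inter_eq ▸ Set.inter_subset_right)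

theorem ld_mem_union (hg : GluingOverFI B C F I) (hx : x ∈ F ∪ I) (hy : y ∈ F ∪ I) :
    IRL.ld x y ∈ F ∪ I := by
  rw [← hg.inter_eq] at hx hy ⊢
  exact ⟨hg.B_ld x hx.1 y hy.1, hg.C_ld x hx.2 y hy.2⟩

theorem rd_mem_union (hg : GluingOverFI B C F I) (hx : x ∈ F ∪ I) (hy : y ∈ F ∪ I) :
    IRL.rd x y ∈ F ∪ I := by
  rw [← hg.inter_eq] at hx hy ⊢
  exact ⟨hg.B_rd x hx.1 y hy.1, hg.C_rd x hx.2 y hy.2⟩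

end GluingOverFI

theorem mul_filter_mem_Cminus_general {D : Type*} [IRL D] {C F I : Set D}
    (hF : IsUpperSet F) (hF_mul : ∀ x ∈ F, ∀ y ∈ F, x * y ∈ F) (hI : IsLowerSet I)
    (hFC : F ⊆ C) (hC_mul : ∀ x ∈ C, ∀ y ∈ C, x * y ∈ C)
    (h_ld : ∀ x ∈ F ∪ I, ∀ y ∈ F ∪ I, IRL.ld x y ∈ F ∪ I)
    (h_rd : ∀ x ∈ F ∪ I, ∀ y ∈ F ∪ I, IRL.rd x y ∈ F ∪ I) :
    ∀ c ∈ C \ (F ∪ I), ∀ f ∈ F,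
      c * f ∈ C \ (F ∪ I) ∧ f * c ∈ C \ (F ∪ I) := by
  rintro c ⟨hcC, hc⟩ f hf
  have hf' : f ∈ F ∪ I := Or.inl hf
  refine ⟨⟨hC_mul c hcC f (hFC hf), fun hcf ↦ hc ?_⟩, ⟨hC_mul f (hFC hf) c hcC, fun hfc ↦ hc ?_⟩⟩
  · exact IRL.mem_union_of_rd_mul_mem_union hF hF_mul hI hf (h_rd _ hcf f hf')
  · exact IRL.mem_union_of_ld_mul_mem_union hF hF_mul hI hf (h_ld f hf' _ hfc)

/-- in a gluing of `B` and `C` over `F` and `I`, for every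
`c ∈ C⁻ = C ∖ (F ∪ I)` and `f ∈ F`, both `c·f` and `f·c` belong to `C⁻`. -/
theorem mul_filter_mem_Cminus {D : Type*} [IRL D] {B C F I : Set D}
    (hg : GluingOverFI B C F I) :
    ∀ c ∈ C \ (F ∪ I), ∀ f ∈ F,
      c * f ∈ C \ (F ∪ I) ∧ f * c ∈ C \ (F ∪ I) := by
  exact mul_filter_mem_Cminus_general hg.isUpperSet_F hg.filt.mul_mem hg.isLowerSet_I
    hg.F_subset_C hg.C_mul (fun _ hx _ ↦ hg.ld_mem_union hx) (fun _ hx _ ↦ hg.rd_mem_union hx)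
end

section
/- Let D be a gluing of B and C over F, where additionally B is closed under ∨ and F ≠ {1}. Then D satisfies the semilinearity equation (u\((y\x)·u)) ∨ ((v·(x\y))/v) = 1 for all x, y, u, v ∈ D if and only if this equation holds for all x, y, u, v ∈ B and for all x, y, u, v ∈ C. -/
/-- A gluing of `B` and `C` over the congruence filter `F = B ∩ C`. -/
structure GluingOverF {D : Type*} [IRL D] (B C F : Set D) : Prop where
  union_eq : B ∪ C = Set.univ
  inter_eq : B ∩ C = F
  filt : IRL.IsCongFilter F
  one_mem : (1 : D) ∈ F
  lt_BC : ∀ b ∈ B \ F, ∀ c ∈ C \ F, b < c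
  lt_CF : ∀ c ∈ C \ F, ∀ f ∈ F, f ≠ 1 → c < f
  C_sup : ∀ x ∈ C, ∀ y ∈ C, x ⊔ y ∈ C
  C_inf : ∀ x ∈ C, ∀ y ∈ C, x ⊓ y ∈ C
  C_mul : ∀ x ∈ C, ∀ y ∈ C, x * y ∈ C
  C_ld : ∀ x ∈ C, ∀ y ∈ C, IRL.ld x y ∈ C
  C_rd : ∀ x ∈ C, ∀ y ∈ C, IRL.rd x y ∈ C
  B_inf : ∀ x ∈ B, ∀ y ∈ B, x ⊓ y ∈ B
  B_mul : ∀ x ∈ B, ∀ y ∈ B, x * y ∈ B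
  B_ld : ∀ x ∈ B, ∀ y ∈ B, IRL.ld x y ∈ B
  B_rd : ∀ x ∈ B, ∀ y ∈ B, IRL.rd x y ∈ B

/-!
In an integral residuated lattice `a ⊔ b = 1` forces `b \ a = a` and `a \ b = b`, so semilinearity
amounts to prelinearity `(y \ x) ⊔ (x \ y) = 1` together with the preservation of `a ⊔ b = 1` under
left conjugation of `a` and right conjugation of `b`. Both conditions pass from `B` and `C` to `D`:
incomparable elements of `D` lie in a common component, and so do two non-unit elements with join
`1` and the conjugating element `w`, unless `F = {1}`, both lie in `C ∖ F` and `w` lies in `B ∖ F`.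
In that exceptional case `w * c = w = c * w` for all `c ∈ C ∖ F`, so the conjugates are `1`.
-/

namespace IRL

variable {α : Type*} [IRL α] {a b u v x y : α} {S : Set α}

theorem one_sup (x : α) : 1 ⊔ x = 1 := sup_eq_left.2 (le_one x)

theorem sup_one (x : α) : x ⊔ 1 = 1 := sup_eq_right.2 (le_one x)

theorem one_ld (x : α) : ld 1 x = x :=
  eq_of_forall_le_iff fun z => by rw [← mul_le_iff_ld, one_mul]

theorem rd_one (x : α) : rd x 1 = x :=
  eq_of_forall_le_iff fun z => by rw [← mul_le_iff_rd, mul_one]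

theorem ld_eq_one_iff : ld x y = 1 ↔ x ≤ y := by
  rw [← (le_one _).ge_iff_eq, ← mul_le_iff_ld, mul_one]

theorem rd_eq_one_iff : rd y x = 1 ↔ x ≤ y := by
  rw [← (le_one _).ge_iff_eq, ← mul_le_iff_rd, one_mul]

theorem mul_le_left_factor (x y : α) : x * y ≤ x :=
  (mul_le_iff_ld x y x).2 ((le_one y).trans (ld_eq_one_iff.2 le_rfl).ge)

theorem mul_le_right_factor (x y : α) : x * y ≤ y :=
  (mul_le_iff_rd x y y).2 ((le_one x).trans (rd_eq_one_iff.2 le_rfl).ge)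

theorem ld_eq_right_of_sup_eq_one (h : a ⊔ b = 1) : ld a b = b := by
  refine le_antisymm ?_ ((mul_le_iff_ld a b b).1 (mul_le_right_factor a b))
  have ha : a ≤ rd b (ld a b) := (mul_le_iff_rd _ _ _).1 ((mul_le_iff_ld _ _ _).2 le_rfl)
  have hb : b ≤ rd b (ld a b) := (mul_le_iff_rd _ _ _).1 (mul_le_left_factor _ _)
  have hone : 1 ≤ rd b (ld a b) := h ▸ sup_le ha hb
  simpa only [one_mul] using (mul_le_iff_rd _ _ _).2 hone

/-- The semilinearity equation for all values of the variables in `S`. The set `S` need not be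
closed under the operations, which are always those of the ambient algebra. -/
def SemilinearOn (S : Set α) : Prop :=
  ∀ x ∈ S, ∀ y ∈ S, ∀ u ∈ S, ∀ v ∈ S, ld u (ld y x * u) ⊔ rd (v * ld x y) v = 1

namespace SemilinearOn

theorem mono {T : Set α} (hT : SemilinearOn T) (hST : S ⊆ T) : SemilinearOn S :=
  fun x hx y hy u hu v hv => hT x (hST hx) y (hST hy) u (hST hu) v (hST hv)

theorem ld_sup_ld_eq_one (hS : SemilinearOn S) (h1 : 1 ∈ S) (hx : x ∈ S) (hy : y ∈ S) :
    ld y x ⊔ ld x y = 1 := by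
  simpa only [one_ld, rd_one, one_mul, mul_one] using hS x hx y hy 1 h1 1 h1

theorem conj_sup_conj_eq_one (hS : SemilinearOn S) (ha : a ∈ S) (hb : b ∈ S) (hu : u ∈ S)
    (hv : v ∈ S) (hab : a ⊔ b = 1) : ld u (a * u) ⊔ rd (v * b) v = 1 := by
  have hba : b ⊔ a = 1 := sup_comm a b ▸ hab
  simpa only [ld_eq_right_of_sup_eq_one hab, ld_eq_right_of_sup_eq_one hba]
    using hS a ha b hb u hu v hv

theorem conj_sup_eq_one (hS : SemilinearOn S) (h1 : 1 ∈ S) (ha : a ∈ S) (hb : b ∈ S)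
    (hu : u ∈ S) (hab : a ⊔ b = 1) : ld u (a * u) ⊔ b = 1 := by
  simpa only [rd_one, one_mul] using hS.conj_sup_conj_eq_one ha hb hu h1 hab

theorem sup_conj_eq_one (hS : SemilinearOn S) (h1 : 1 ∈ S) (ha : a ∈ S) (hb : b ∈ S)
    (hv : v ∈ S) (hab : a ⊔ b = 1) : a ⊔ rd (v * b) v = 1 := by
  simpa only [one_ld, mul_one] using hS.conj_sup_conj_eq_one ha hb h1 hv hab

end SemilinearOn

end IRL

namespace GluingOverF

open IRL

variable {D : Type*} [IRL D] {B C F : Set D} {a b c d f v w : D}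

theorem mem_or_mem (hg : GluingOverF B C F) (d : D) : d ∈ B ∨ d ∈ C :=
  hg.union_eq.ge (Set.mem_univ d)

theorem subset_left (hg : GluingOverF B C F) : F ⊆ B :=
  hg.inter_eq ▸ Set.inter_subset_left

theorem subset_right (hg : GluingOverF B C F) : F ⊆ C :=
  hg.inter_eq ▸ Set.inter_subset_right

theorem mem_left_of_notMem_right (hg : GluingOverF B C F) (hd : d ∉ C) : d ∈ B \ F :=
  ⟨(hg.mem_or_mem d).resolve_right hd, fun h => hd (hg.subset_right h)⟩

theorem mem_right_of_notMem_left (hg : GluingOverF B C F) (hd : d ∉ B) : d ∈ C \ F :=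
  ⟨(hg.mem_or_mem d).resolve_left hd, fun h => hd (hg.subset_left h)⟩

theorem le_or_le_or_mem (hg : GluingOverF B C F) (x y : D) :
    x ≤ y ∨ y ≤ x ∨ (x ∈ B ∧ y ∈ B) ∨ (x ∈ C ∧ y ∈ C) := by
  by_cases hxB : x ∈ B <;> by_cases hyB : y ∈ B
  · exact .inr (.inr (.inl ⟨hxB, hyB⟩))
  · have hy := hg.mem_right_of_notMem_left hyB
    by_cases hxC : x ∈ C
    · exact .inr (.inr (.inr ⟨hxC, hy.1⟩))
    · exact .inl (hg.lt_BC x (hg.mem_left_of_notMem_right hxC) y hy).le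
  · have hx := hg.mem_right_of_notMem_left hxB
    by_cases hyC : y ∈ C
    · exact .inr (.inr (.inr ⟨hx.1, hyC⟩))
    · exact .inr (.inl (hg.lt_BC y (hg.mem_left_of_notMem_right hyC) x hx).le)
  · exact .inr (.inr (.inr ⟨(hg.mem_right_of_notMem_left hxB).1,
      (hg.mem_right_of_notMem_left hyB).1⟩))

theorem mem_left_of_le (hg : GluingOverF B C F) (hv : v ∈ B \ F) (hd : d ≤ v) : d ∈ B := by
  by_contra hdB
  exact (hg.lt_BC v hv d (hg.mem_right_of_notMem_left hdB)).not_ge hd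

theorem mem_of_le_of_mem_left (hg : GluingOverF B C F) (hc : c ∈ C \ F) (hcd : c ≤ d)
    (hd : d ∈ B) : d ∈ F := by
  by_contra hdF
  exact (hg.lt_BC d ⟨hd, hdF⟩ c hc).not_ge hcd

theorem ld_mul_mem (hg : GluingOverF B C F) (hv : v ∈ B \ F) (hc : c ∈ C \ F) :
    ld v (v * c) ∈ F :=
  hg.mem_of_le_of_mem_left hc ((mul_le_iff_ld _ _ _).1 le_rfl)
    (hg.B_ld v hv.1 _ (hg.mem_left_of_le hv (mul_le_left_factor v c)))

theorem rd_mul_mem (hg : GluingOverF B C F) (hv : v ∈ B \ F) (hc : c ∈ C \ F) :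
    rd (c * v) v ∈ F :=
  hg.mem_of_le_of_mem_left hc ((mul_le_iff_rd _ _ _).1 le_rfl)
    (hg.B_rd _ (hg.mem_left_of_le hv (mul_le_right_factor c v)) v hv.1)

theorem mul_eq_left (hg : GluingOverF B C F) (hF : F = {1}) (hv : v ∈ B \ F)
    (hc : c ∈ C \ F) : v * c = v :=
  (mul_le_left_factor v c).antisymm (ld_eq_one_iff.1 (hF.le (hg.ld_mul_mem hv hc)))

theorem mul_eq_right (hg : GluingOverF B C F) (hF : F = {1}) (hv : v ∈ B \ F)
    (hc : c ∈ C \ F) : c * v = v :=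
  (mul_le_right_factor c v).antisymm (rd_eq_one_iff.1 (hF.le (hg.rd_mul_mem hv hc)))

theorem lt_of_notMem_of_mem (hg : GluingOverF B C F) (hc : c ∈ C \ F) (hd : d ∉ F)
    (hf : f ∈ F) (hf1 : f ≠ 1) : d < f := by
  rcases hg.mem_or_mem d with hdB | hdC
  · exact (hg.lt_BC d ⟨hdB, hd⟩ c hc).trans (hg.lt_CF c hc f hf hf1)
  · exact hg.lt_CF d ⟨hdC, hd⟩ f hf hf1

theorem mem_of_sup_eq_one (hg : GluingOverF B C F) (hc : c ∈ C \ F) (hab : a ⊔ b = 1)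
    (ha : a ∈ F) (ha1 : a ≠ 1) : b ∈ F := by
  by_contra hb
  exact ha1 (sup_eq_left.2 (hg.lt_of_notMem_of_mem hc hb ha ha1).le ▸ hab)

theorem eq_singleton_one_of_sup_eq_one (hg : GluingOverF B C F) (hc : c ∈ C \ F)
    (hab : a ⊔ b = 1) (ha : a ∉ F) (hb : b ∉ F) : F = {1} := by
  refine Set.eq_singleton_iff_unique_mem.2 ⟨hg.one_mem, fun f hf => ?_⟩
  by_contra hf1
  have hle : a ⊔ b ≤ f :=
    sup_le (hg.lt_of_notMem_of_mem hc ha hf hf1).le (hg.lt_of_notMem_of_mem hc hb hf hf1).le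
  exact hf1 ((le_one f).antisymm (hab ▸ hle))

theorem mem_right_of_sup_eq_one (hg : GluingOverF B C F) (hc : c ∈ C \ F) (hab : a ⊔ b = 1)
    (hb : b ∉ F) : a ∈ C := by
  by_contra haC
  have ha := hg.mem_left_of_notMem_right haC
  rcases hg.mem_or_mem b with hbB | hbC
  · have hle : a ⊔ b ≤ c := sup_le (hg.lt_BC a ha c hc).le (hg.lt_BC b ⟨hbB, hb⟩ c hc).le
    exact hc.2 ((le_one c).antisymm (hab ▸ hle) ▸ hg.one_mem)
  · have hb1 : b = 1 := sup_eq_right.2 (hg.lt_BC a ha b ⟨hbC, hb⟩).le ▸ hab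
    exact hb (hb1 ▸ hg.one_mem)

theorem mem_or_eq_singleton_one_of_sup_eq_one (hg : GluingOverF B C F) (hc : c ∈ C \ F)
    (hab : a ⊔ b = 1) (ha1 : a ≠ 1) (hb1 : b ≠ 1) :
    (a ∈ F ∧ b ∈ F) ∨ (a ∈ C \ F ∧ b ∈ C \ F ∧ F = {1}) := by
  have hba : b ⊔ a = 1 := sup_comm a b ▸ hab
  by_cases ha : a ∈ F
  · exact .inl ⟨ha, hg.mem_of_sup_eq_one hc hab ha ha1⟩
  · have hb : b ∉ F := fun hb => ha (hg.mem_of_sup_eq_one hc hba hb hb1)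
    exact .inr ⟨⟨hg.mem_right_of_sup_eq_one hc hab hb, ha⟩,
      ⟨hg.mem_right_of_sup_eq_one hc hba ha, hb⟩,
      hg.eq_singleton_one_of_sup_eq_one hc hab ha hb⟩

theorem mem_or_mul_eq_of_sup_eq_one (hg : GluingOverF B C F) (hab : a ⊔ b = 1)
    (ha1 : a ≠ 1) (hb1 : b ≠ 1) (w : D) :
    (a ∈ B ∧ b ∈ B ∧ w ∈ B) ∨ (a ∈ C ∧ b ∈ C ∧ w ∈ C) ∨ (a * w = w ∧ w * b = w) := by
  by_cases hBuniv : ∀ d, d ∈ B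
  · exact .inl ⟨hBuniv a, hBuniv b, hBuniv w⟩
  push Not at hBuniv
  obtain ⟨c, hcB⟩ := hBuniv
  have hc := hg.mem_right_of_notMem_left hcB
  rcases hg.mem_or_eq_singleton_one_of_sup_eq_one hc hab ha1 hb1 with ⟨ha, hb⟩ | ⟨ha, hb, hF⟩
  · exact (hg.mem_or_mem w).imp (fun hw => ⟨hg.subset_left ha, hg.subset_left hb, hw⟩)
      fun hw => .inl ⟨hg.subset_right ha, hg.subset_right hb, hw⟩
  · by_cases hw : w ∈ C
    · exact .inr (.inl ⟨ha.1, hb.1, hw⟩)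
    · have hwB := hg.mem_left_of_notMem_right hw
      exact .inr (.inr ⟨hg.mul_eq_right hF hwB ha, hg.mul_eq_left hF hwB hb⟩)

theorem ld_sup_ld_eq_one (hg : GluingOverF B C F) (hB : SemilinearOn B) (hC : SemilinearOn C)
    (x y : D) : ld y x ⊔ ld x y = 1 := by
  rcases hg.le_or_le_or_mem x y with hxy | hyx | ⟨hx, hy⟩ | ⟨hx, hy⟩
  · rw [ld_eq_one_iff.2 hxy, sup_one]
  · rw [ld_eq_one_iff.2 hyx, one_sup]
  · exact hB.ld_sup_ld_eq_one (hg.subset_left hg.one_mem) hx hy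
  · exact hC.ld_sup_ld_eq_one (hg.subset_right hg.one_mem) hx hy

theorem conj_sup_eq_one (hg : GluingOverF B C F) (hB : SemilinearOn B) (hC : SemilinearOn C)
    (hab : a ⊔ b = 1) (u : D) : ld u (a * u) ⊔ b = 1 := by
  rcases eq_or_ne a 1 with rfl | ha1
  · rw [one_mul, ld_eq_one_iff.2 le_rfl, one_sup]
  rcases eq_or_ne b 1 with rfl | hb1
  · exact sup_one _
  rcases hg.mem_or_mul_eq_of_sup_eq_one hab ha1 hb1 u with
    ⟨ha, hb, hu⟩ | ⟨ha, hb, hu⟩ | ⟨hau, -⟩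
  · exact hB.conj_sup_eq_one (hg.subset_left hg.one_mem) ha hb hu hab
  · exact hC.conj_sup_eq_one (hg.subset_right hg.one_mem) ha hb hu hab
  · rw [hau, ld_eq_one_iff.2 le_rfl, one_sup]

theorem sup_conj_eq_one (hg : GluingOverF B C F) (hB : SemilinearOn B) (hC : SemilinearOn C)
    (hab : a ⊔ b = 1) (v : D) : a ⊔ rd (v * b) v = 1 := by
  rcases eq_or_ne a 1 with rfl | ha1
  · exact one_sup _
  rcases eq_or_ne b 1 with rfl | hb1
  · rw [mul_one, rd_eq_one_iff.2 le_rfl, sup_one]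
  rcases hg.mem_or_mul_eq_of_sup_eq_one hab ha1 hb1 v with
    ⟨ha, hb, hv⟩ | ⟨ha, hb, hv⟩ | ⟨-, hvb⟩
  · exact hB.sup_conj_eq_one (hg.subset_left hg.one_mem) ha hb hv hab
  · exact hC.sup_conj_eq_one (hg.subset_right hg.one_mem) ha hb hv hab
  · rw [hvb, rd_eq_one_iff.2 le_rfl, sup_one]

end GluingOverF

open IRL in
theorem gluing_semilinear_iff_general {D : Type*} [IRL D] {B C F : Set D}
    (hg : GluingOverF B C F) :
    SemilinearOn (Set.univ : Set D) ↔ SemilinearOn B ∧ SemilinearOn C := by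
  refine ⟨fun h => ⟨h.mono (Set.subset_univ B), h.mono (Set.subset_univ C)⟩, ?_⟩
  rintro ⟨hB, hC⟩ x - y - u - v -
  have hprelinear : ld y x ⊔ ld x y = 1 := hg.ld_sup_ld_eq_one hB hC x y
  have hleft : ld u (ld y x * u) ⊔ ld x y = 1 := hg.conj_sup_eq_one hB hC hprelinear u
  exact hg.sup_conj_eq_one hB hC hleft v

/-- if `D` is a gluing of `B` and `C` over `F`, `B` is moreover closed
under joins and `F ≠ {1}`, then `D` satisfies the semilinearity equation
`(u\((y\x)·u)) ∨ ((v·(x\y))/v) = 1` iff both `B` and `C` satisfy it. -/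
theorem gluing_semilinear_iff {D : Type*} [IRL D] {B C F : Set D}
    (hg : GluingOverF B C F)
    (hBsup : ∀ x ∈ B, ∀ y ∈ B, x ⊔ y ∈ B)
    (hFne : F ≠ {1}) :
    (∀ x y u v : D,
        IRL.ld u (IRL.ld y x * u) ⊔ IRL.rd (v * IRL.ld x y) v = 1) ↔
      ((∀ x ∈ B, ∀ y ∈ B, ∀ u ∈ B, ∀ v ∈ B,
          IRL.ld u (IRL.ld y x * u) ⊔ IRL.rd (v * IRL.ld x y) v = 1) ∧
       (∀ x ∈ C, ∀ y ∈ C, ∀ u ∈ C, ∀ v ∈ C,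
          IRL.ld u (IRL.ld y x * u) ⊔ IRL.rd (v * IRL.ld x y) v = 1)) := by
  simpa only [IRL.SemilinearOn, Set.mem_univ, forall_const] using gluing_semilinear_iff_general hg
end
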